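/- Let n ≥ 2 and suppose that every M ∈ S_n with λ_{n−1}(M) ≤ λ_{n−1}(M′) for all M′ ∈ S_n satisfies λ_n(M) = λ_{n−1}(M). Then there exists M ∈ S_n minimising λ_{n−1} over S_n, with all diagonal entries equal to 0, such that every row of M contains at most one entry that does not belong to {0, 1}. -/

import Mathlib

/-!
By Courant–Fischer, `λ_{n-1}(A) ≤ c` holds exactly when the quadratic form of `A` is at most
`c‖x‖²` on some plane (`exists_formLeOn`, `lambdaK_le_of_formLeOn`). All three steps below use only this criterion.

* It makes `λ_{n-1}` 1-Lipschitz for the entrywise `ℓ¹` distance, so a minimiser exists on the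
  compact set `S_n`.
* Deleting the diagonal of a matrix with nonnegative entries only decreases the form, so a
  minimiser with zero diagonal exists.
* Let `M` be such a minimiser, `U` a plane witnessing its `λ_{n-1}`, and suppose that row `i` has
  two entries `M i j`, `M i k` strictly between `0` and `1`. The three functionals `x_i, x_j, x_k`
  are linearly dependent on `U`, which yields `(a, b) ≠ 0` with `x_i (a x_j + b x_k) ≤ 0` on `U`
  (`exists_direction`). Moving the two entries in the direction `(a, b)` therefore does not
  increase the form on `U`, and the motion can be continued until one of the entries reaches `0`
  or `1`. The result is a minimiser with fewer fractional entries; iterating ends the proof.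
-/

open Matrix

/-- The list of eigenvalues of a real symmetric matrix, sorted in decreasing order. -/
noncomputable def eigsDesc {V : Type} [Fintype V] [DecidableEq V] (A : Matrix V V ℝ) : List ℝ :=
  if h : A.IsHermitian then
    ((Finset.univ : Finset V).val.map h.eigenvalues).sort (· ≥ ·)
  else []

/-- The `k`-th largest eigenvalue (1-indexed, counted with multiplicity) of a real
symmetric matrix. -/
noncomputable def lambdaK {V : Type} [Fintype V] [DecidableEq V] (A : Matrix V V ℝ) (k : ℕ) : ℝ :=
  (eigsDesc A).getD (k - 1) 0

/-- `M ∈ 𝒮ₙ`: `M` is a real symmetric matrix with all entries in `[0, 1]`. -/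
def memS {n : ℕ} (M : Matrix (Fin n) (Fin n) ℝ) : Prop :=
  M.IsSymm ∧ ∀ i j, M i j ∈ Set.Icc (0 : ℝ) 1

/-! ### The planar criterion for the second smallest eigenvalue -/

/-- The quadratic form of `A` is at most `c‖x‖²` on the plane spanned by two linearly independent
vectors `p` and `q`. -/
def FormLeOn {n : ℕ} (A : Matrix (Fin n) (Fin n) ℝ) (c : ℝ) (p q : Fin n → ℝ) : Prop :=
  (∀ s t : ℝ, s • p + t • q = 0 → s = 0 ∧ t = 0) ∧
  ∀ s t : ℝ, (s • p + t • q) ⬝ᵥ A *ᵥ (s • p + t • q) ≤ c * ((s • p + t • q) ⬝ᵥ (s • p + t • q))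

lemma eigsDesc_eq {n : ℕ} (A : Matrix (Fin n) (Fin n) ℝ) (hA : A.IsHermitian) :
    eigsDesc A = List.ofFn hA.eigenvalues₀ := by
  unfold eigsDesc
  rw [dif_pos hA]
  apply List.Perm.eq_of_pairwise' (r := (· ≥ ·))
  · exact Multiset.pairwise_sort _ _
  · rw [List.pairwise_ofFn]
    intro i j hij
    exact hA.eigenvalues₀_antitone hij.le
  · rw [← Multiset.coe_eq_coe, Multiset.sort_eq]
    have h1 : hA.eigenvalues = hA.eigenvalues₀ ∘
        (Fintype.equivOfCardEq (Fintype.card_fin (Fintype.card (Fin n)))).symm := by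
      rfl
    rw [h1, ← Multiset.map_map]
    rw [← Fin.univ_val_map]
    congr 1
    have := Finset.map_univ_equiv
      (Fintype.equivOfCardEq (Fintype.card_fin (Fintype.card (Fin n)))).symm
    exact congrArg Finset.val this

/-- `i₀` indexes a smallest eigenvalue and `i₁` a second smallest one, in Mathlib's unsorted
enumeration of the eigenvalues by `Fin n`. -/
lemma exists_indices {n : ℕ} (hn : 2 ≤ n) (A : Matrix (Fin n) (Fin n) ℝ) (hA : A.IsHermitian) :
    ∃ i₀ i₁ : Fin n, i₀ ≠ i₁ ∧ hA.eigenvalues i₀ ≤ lambdaK A (n - 1) ∧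
      hA.eigenvalues i₁ = lambdaK A (n - 1) ∧
      ∀ j, j ≠ i₀ → lambdaK A (n - 1) ≤ hA.eigenvalues j := by
  have hc : Fintype.card (Fin n) = n := Fintype.card_fin n
  let e := Fintype.equivOfCardEq (Fintype.card_fin (Fintype.card (Fin n)))
  have h1 : ∀ j, hA.eigenvalues j = hA.eigenvalues₀ (e.symm j) := fun j => rfl
  have hl : lambdaK A (n - 1) = hA.eigenvalues₀ ⟨n - 2, by omega⟩ := by
    unfold lambdaK
    rw [eigsDesc_eq A hA, List.getD_eq_getElem _ _ (by simp; omega), List.getElem_ofFn]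
    rfl
  refine ⟨e ⟨n - 1, by omega⟩, e ⟨n - 2, by omega⟩, ?_, ?_, ?_, ?_⟩
  · intro h
    have := congrArg Fin.val (e.injective h)
    simp only at this
    omega
  · rw [h1, hl, Equiv.symm_apply_apply]
    apply hA.eigenvalues₀_antitone
    rw [Fin.le_def]
    simp only
    omega
  · rw [h1, hl, Equiv.symm_apply_apply]
  · intro j hj
    rw [h1, hl]
    apply hA.eigenvalues₀_antitone
    have hj' : e.symm j ≠ ⟨n - 1, by omega⟩ := fun h => hj (by rw [← h, Equiv.apply_symm_apply])
    have h3 : (e.symm j).val ≠ n - 1 := fun h => hj' (Fin.ext h)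
    have h4 := (e.symm j).isLt
    rw [Fin.le_def]
    simp only
    omega

lemma sum_dot_mul_dot {n : ℕ} (b : OrthonormalBasis (Fin n) ℝ (EuclideanSpace ℝ (Fin n)))
    (x y : Fin n → ℝ) :
    ∑ j, (x ⬝ᵥ (b j).ofLp) * ((b j).ofLp ⬝ᵥ y) = x ⬝ᵥ y := by
  have h := b.sum_inner_mul_inner (WithLp.toLp 2 x) (WithLp.toLp 2 y)
  simp only [EuclideanSpace.inner_eq_star_dotProduct, star_trivial] at h
  rw [dotProduct_comm x y, ← h]
  refine Finset.sum_congr rfl fun j _ => ?_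
  rw [dotProduct_comm x, dotProduct_comm _ y]

lemma dot_orthonormalBasis {n : ℕ} (b : OrthonormalBasis (Fin n) ℝ (EuclideanSpace ℝ (Fin n)))
    (i j : Fin n) : (b i).ofLp ⬝ᵥ (b j).ofLp = if i = j then 1 else 0 := by
  have h := orthonormal_iff_ite.mp b.orthonormal i j
  rw [EuclideanSpace.inner_eq_star_dotProduct, star_trivial, dotProduct_comm] at h
  exact h

/-- A plane on which the form of `A` is at most `λ_{n-1}(A)‖x‖²`: the span of two eigenvectors
for the two smallest eigenvalues. -/
lemma exists_formLeOn {n : ℕ} (hn : 2 ≤ n) (A : Matrix (Fin n) (Fin n) ℝ) (hA : A.IsHermitian) :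
    ∃ p q, FormLeOn A (lambdaK A (n - 1)) p q := by
  obtain ⟨i₀, i₁, hne, h0, h1, -⟩ := exists_indices hn A hA
  have d00 := dot_orthonormalBasis hA.eigenvectorBasis i₀ i₀
  have d01 := dot_orthonormalBasis hA.eigenvectorBasis i₀ i₁
  have d10 := dot_orthonormalBasis hA.eigenvectorBasis i₁ i₀
  have d11 := dot_orthonormalBasis hA.eigenvectorBasis i₁ i₁
  rw [if_pos rfl] at d00 d11
  rw [if_neg hne] at d01
  rw [if_neg hne.symm] at d10
  have m0 := hA.mulVec_eigenvectorBasis i₀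
  have m1 := hA.mulVec_eigenvectorBasis i₁
  generalize (hA.eigenvectorBasis i₀).ofLp = p at *
  generalize (hA.eigenvectorBasis i₁).ofLp = q at *
  refine ⟨p, q, ?_, ?_⟩
  · intro s t h
    have hp := congrArg (fun z => p ⬝ᵥ z) h
    have hq := congrArg (fun z => q ⬝ᵥ z) h
    simp [dotProduct_add, d00, d01, d10, d11] at hp hq
    exact ⟨hp, hq⟩
  · intro s t
    simp only [mulVec_add, mulVec_smul, m0, m1, dotProduct_add, add_dotProduct, dotProduct_smul,
      smul_dotProduct, d00, d01, d10, d11, smul_eq_mul]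
    rw [h1]
    nlinarith [mul_le_mul_of_nonneg_left h0 (mul_self_nonneg s)]

/-- A plane always contains a nonzero vector orthogonal to the bottom eigenvector, and there the
form of `A` is at least `λ_{n-1}(A)‖x‖²`. -/
lemma lambdaK_le_of_formLeOn {n : ℕ} (hn : 2 ≤ n) (A : Matrix (Fin n) (Fin n) ℝ)
    (hA : A.IsHermitian) {c : ℝ} {p q : Fin n → ℝ} (h : FormLeOn A c p q) :
    lambdaK A (n - 1) ≤ c := by
  obtain ⟨hli, hf⟩ := h
  obtain ⟨i₀, i₁, hne, -, -, h2⟩ := exists_indices hn A hA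
  set b := hA.eigenvectorBasis with hb
  obtain ⟨s, t, hst, horth⟩ : ∃ s t : ℝ, ¬ (s = 0 ∧ t = 0) ∧
      (s • p + t • q) ⬝ᵥ (b i₀).ofLp = 0 := by
    by_cases hp : p ⬝ᵥ (b i₀).ofLp = 0
    · exact ⟨1, 0, by simp, by simp [hp]⟩
    · refine ⟨q ⬝ᵥ (b i₀).ofLp, -(p ⬝ᵥ (b i₀).ofLp), fun h => hp (by simpa using h.2), ?_⟩
      simp only [add_dotProduct, smul_dotProduct, smul_eq_mul]
      ring
  have hw : s • p + t • q ≠ 0 := fun h => hst (hli s t h)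
  have hform := hf s t
  generalize s • p + t • q = w at *
  have hpos : 0 < w ⬝ᵥ w := by
    have h0 : 0 ≤ w ⬝ᵥ w := Finset.sum_nonneg fun i _ => mul_self_nonneg _
    exact lt_of_le_of_ne h0 fun h => hw (dotProduct_self_eq_zero.mp h.symm)
  have hcoef : ∀ j, (b j).ofLp ⬝ᵥ A *ᵥ w = hA.eigenvalues j * ((b j).ofLp ⬝ᵥ w) := by
    intro j
    have hT : Aᵀ = A := by simpa [Matrix.IsHermitian, conjTranspose_eq_transpose_of_trivial] using hA
    rw [dotProduct_mulVec, ← mulVec_transpose, hT, hb, hA.mulVec_eigenvectorBasis j,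
      smul_dotProduct, smul_eq_mul]
  have key : lambdaK A (n - 1) * (w ⬝ᵥ w) ≤ w ⬝ᵥ A *ᵥ w := by
    rw [← sum_dot_mul_dot b w w, ← sum_dot_mul_dot b w (A *ᵥ w), Finset.mul_sum]
    refine Finset.sum_le_sum fun j _ => ?_
    rw [hcoef j, dotProduct_comm (b j).ofLp w]
    by_cases hj : j = i₀
    · subst hj
      simp [horth]
    · nlinarith [mul_le_mul_of_nonneg_right (h2 j hj) (mul_self_nonneg (w ⬝ᵥ (b j).ofLp))]
  exact le_of_mul_le_mul_right (key.trans hform) hpos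

/-! ### Existence of a minimiser -/

lemma memS.isHermitian {n : ℕ} {M : Matrix (Fin n) (Fin n) ℝ} (h : memS M) : M.IsHermitian := by
  rw [Matrix.IsHermitian, conjTranspose_eq_transpose_of_trivial]
  exact h.1

lemma dot_mulVec_le {n : ℕ} (D : Matrix (Fin n) (Fin n) ℝ) (x : Fin n → ℝ) :
    x ⬝ᵥ D *ᵥ x ≤ (∑ i, ∑ j, |D i j|) * (x ⬝ᵥ x) := by
  have hx : ∀ i, x i * x i ≤ x ⬝ᵥ x := fun i =>
    Finset.single_le_sum (f := fun i => x i * x i) (fun _ _ => mul_self_nonneg _)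
      (Finset.mem_univ i)
  have hexp : x ⬝ᵥ D *ᵥ x = ∑ i, ∑ j, x i * D i j * x j := by
    simp only [dotProduct, mulVec, Finset.mul_sum, mul_assoc]
  rw [hexp]
  simp only [Finset.sum_mul]
  refine Finset.sum_le_sum fun i _ => ?_
  refine Finset.sum_le_sum fun j _ => ?_
  have h1 : |x i * x j| ≤ x ⬝ᵥ x := by
    rw [abs_le]
    constructor <;> nlinarith [hx i, hx j, mul_self_nonneg (x i - x j), mul_self_nonneg (x i + x j)]
  calc x i * D i j * x j = D i j * (x i * x j) := by ring
    _ ≤ |D i j * (x i * x j)| := le_abs_self _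
    _ = |D i j| * |x i * x j| := abs_mul _ _
    _ ≤ _ := mul_le_mul_of_nonneg_left h1 (abs_nonneg _)

lemma lambdaK_le_add {n : ℕ} (hn : 2 ≤ n) {A B : Matrix (Fin n) (Fin n) ℝ} (hA : A.IsHermitian)
    (hB : B.IsHermitian) :
    lambdaK B (n - 1) ≤ lambdaK A (n - 1) + ∑ i, ∑ j, |(B - A) i j| := by
  obtain ⟨p, q, h1, h2⟩ := exists_formLeOn hn A hA
  refine lambdaK_le_of_formLeOn hn B hB (p := p) (q := q) ⟨h1, fun s t => ?_⟩
  have h3 := dot_mulVec_le (B - A) (s • p + t • q)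
  rw [sub_mulVec, dotProduct_sub] at h3
  linarith [h2 s t]

lemma exists_minimiser {n : ℕ} (hn : 2 ≤ n) :
    ∃ M : Matrix (Fin n) (Fin n) ℝ, memS M ∧
      ∀ M' : Matrix (Fin n) (Fin n) ℝ, memS M' → lambdaK M (n - 1) ≤ lambdaK M' (n - 1) := by
  have hcpt : IsCompact {M : Matrix (Fin n) (Fin n) ℝ | memS M} := by
    have hbox : IsCompact {M : Matrix (Fin n) (Fin n) ℝ | ∀ i j, M i j ∈ Set.Icc (0 : ℝ) 1} := by
      have h := isCompact_univ_pi (X := fun _ : Fin n => Fin n → ℝ)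
        (s := fun _ => Set.univ.pi fun _ => Set.Icc (0 : ℝ) 1)
        fun _ => isCompact_univ_pi fun _ => isCompact_Icc
      have hset : {M : Matrix (Fin n) (Fin n) ℝ | ∀ i j, M i j ∈ Set.Icc (0 : ℝ) 1} =
          Set.univ.pi fun _ => Set.univ.pi fun _ => Set.Icc (0 : ℝ) 1 :=
        Set.ext fun M => ⟨fun hM i _ j _ => hM i j, fun hM i j => hM i trivial j trivial⟩
      rw [hset]
      exact h
    have hcl : IsClosed {M : Matrix (Fin n) (Fin n) ℝ | M.IsSymm} :=
      isClosed_eq (continuous_id.matrix_transpose) continuous_id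
    exact hbox.inter_left hcl
  have hcont : ContinuousOn (fun M : Matrix (Fin n) (Fin n) ℝ => lambdaK M (n - 1))
      {M | memS M} := by
    intro A hA
    have hz : Filter.Tendsto (fun B : Matrix (Fin n) (Fin n) ℝ => ∑ i, ∑ j, |(B - A) i j|)
        (nhdsWithin A {M | memS M}) (nhds 0) := by
      have hc : Continuous fun B : Matrix (Fin n) (Fin n) ℝ => ∑ i, ∑ j, |(B - A) i j| := by
        simp only [Matrix.sub_apply]
        fun_prop
      have := (hc.tendsto A).mono_left (nhdsWithin_le_nhds (s := {M | memS M}))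
      simpa using this
    rw [ContinuousWithinAt, tendsto_iff_dist_tendsto_zero]
    refine squeeze_zero' (Filter.Eventually.of_forall fun _ => dist_nonneg) ?_ hz
    filter_upwards [self_mem_nhdsWithin] with B hB
    have h1 := lambdaK_le_add hn (memS.isHermitian hA) (memS.isHermitian hB)
    have h2 := lambdaK_le_add hn (memS.isHermitian hB) (memS.isHermitian hA)
    have h3 : ∑ i, ∑ j, |(A - B) i j| = ∑ i, ∑ j, |(B - A) i j| := by
      simp only [Matrix.sub_apply, abs_sub_comm]
    rw [Real.dist_eq, abs_le]
    constructor <;> linarith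
  obtain ⟨M, hM, hmin⟩ := hcpt.exists_isMinOn
    ⟨0, by simp [memS, Matrix.IsSymm]⟩ hcont
  exact ⟨M, hM, fun M' hM' => hmin hM'⟩

/-- Replacing the diagonal by zeros keeps a minimiser a minimiser. -/
lemma exists_minimiser_diag {n : ℕ} (hn : 2 ≤ n) :
    ∃ M : Matrix (Fin n) (Fin n) ℝ, memS M ∧
      (∀ M' : Matrix (Fin n) (Fin n) ℝ, memS M' → lambdaK M (n - 1) ≤ lambdaK M' (n - 1)) ∧
      ∀ i, M i i = 0 := by
  obtain ⟨M, hM, hmin⟩ := exists_minimiser hn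
  have hN : memS (M - diagonal fun i => M i i) := by
    refine ⟨?_, fun i j => ?_⟩
    · rw [Matrix.IsSymm, transpose_sub, diagonal_transpose, hM.1]
    · by_cases h : i = j
      · subst h
        simp
      · simpa [h] using hM.2 i j
  refine ⟨M - diagonal fun i => M i i, hN, fun M' hM' => le_trans ?_ (hmin M' hM'), by simp⟩
  obtain ⟨p, q, h1, h2⟩ := exists_formLeOn hn M hM.isHermitian
  refine lambdaK_le_of_formLeOn hn _ hN.isHermitian (p := p) (q := q) ⟨h1, fun s t => ?_⟩
  refine le_trans ?_ (h2 s t)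
  rw [sub_mulVec, dotProduct_sub, sub_le_self_iff]
  refine Finset.sum_nonneg fun i _ => ?_
  rw [mulVec_diagonal]
  nlinarith [mul_nonneg (hM.2 i i).1 (mul_self_nonneg ((s • p + t • q) i))]

/-! ### Removing fractional entries -/

/-- Here `(pᵢ, qᵢ)`, `(pⱼ, qⱼ)`, `(pₖ, qₖ)` are the coefficients of three linear functionals on a
plane with coordinates `(s, t)`. A linear relation between them turns the product into a
multiple of the square of the first functional, and the sign of `(a, b)` is free. -/
lemma exists_direction (pi qi pj qj pk qk : ℝ) :
    ∃ a b : ℝ, (a ≠ 0 ∨ b ≠ 0) ∧ ∀ s t : ℝ,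
      (s * pi + t * qi) * (a * (s * pj + t * qj) + b * (s * pk + t * qk)) ≤ 0 := by
  -- It suffices to find a relation with arbitrary sign of `α`.
  have aux : ∀ α a b : ℝ, (a ≠ 0 ∨ b ≠ 0) → a * pj + b * pk = α * pi →
      a * qj + b * qk = α * qi → ∃ a b : ℝ, (a ≠ 0 ∨ b ≠ 0) ∧ ∀ s t : ℝ,
      (s * pi + t * qi) * (a * (s * pj + t * qj) + b * (s * pk + t * qk)) ≤ 0 := by
    intro α a b hab hp hq
    have hid : ∀ s t : ℝ, a * (s * pj + t * qj) + b * (s * pk + t * qk)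
        = α * (s * pi + t * qi) := by
      intro s t
      linear_combination s * hp + t * hq
    rcases le_total α 0 with hα | hα
    · refine ⟨a, b, hab, fun s t => ?_⟩
      rw [hid]
      nlinarith [mul_nonneg (neg_nonneg.mpr hα) (mul_self_nonneg (s * pi + t * qi))]
    · refine ⟨-a, -b, by simpa using hab, fun s t => ?_⟩
      have : -a * (s * pj + t * qj) + -b * (s * pk + t * qk) = -(α * (s * pi + t * qi)) := by
        rw [← hid]
        ring
      rw [this]
      nlinarith [mul_nonneg hα (mul_self_nonneg (s * pi + t * qi))]
  by_cases hab : (pk * qi - pi * qk) ≠ 0 ∨ (pi * qj - pj * qi) ≠ 0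
  · exact aux (pk * qj - pj * qk) _ _ hab (by ring) (by ring)
  · push Not at hab
    obtain ⟨-, h2⟩ := hab
    by_cases hp : pi = 0
    · by_cases hq : qi = 0
      · exact ⟨1, 0, by simp, fun s t => by simp [hp, hq]⟩
      · refine aux (qj / qi) 1 0 (by simp) ?_ ?_
        · field_simp
          linear_combination -h2
        · field_simp
          ring
    · refine aux (pj / pi) 1 0 (by simp) ?_ ?_
      · field_simp
        ring
      · field_simp
        linear_combination h2

lemma exists_hit {x a : ℝ} (hx0 : 0 < x) (hx1 : x < 1) (ha : a ≠ 0) :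
    ∃ τ : ℝ, 0 ≤ τ ∧ (x + τ * a = 0 ∨ x + τ * a = 1) ∧
      ∀ σ, 0 ≤ σ → σ ≤ τ → x + σ * a ∈ Set.Icc (0 : ℝ) 1 := by
  rcases lt_or_gt_of_ne ha with h | h
  · have e : x / -a * a = -x := by field_simp
    refine ⟨x / (-a), div_nonneg hx0.le (by linarith), Or.inl (by linarith), fun σ h0 h1 => ?_⟩
    constructor <;> nlinarith
  · have e : (1 - x) / a * a = 1 - x := by field_simp
    refine ⟨(1 - x) / a, div_nonneg (by linarith) h.le, Or.inr (by linarith), fun σ h0 h1 => ?_⟩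
    constructor <;> nlinarith

/-- A ray from an interior point of the unit square leaves it through a side. -/
lemma exists_step {x y a b : ℝ} (hx0 : 0 < x) (hx1 : x < 1) (hy0 : 0 < y) (hy1 : y < 1)
    (hab : a ≠ 0 ∨ b ≠ 0) :
    ∃ τ : ℝ, 0 ≤ τ ∧ x + τ * a ∈ Set.Icc (0 : ℝ) 1 ∧ y + τ * b ∈ Set.Icc (0 : ℝ) 1 ∧
      ((x + τ * a = 0 ∨ x + τ * a = 1) ∨ (y + τ * b = 0 ∨ y + τ * b = 1)) := by
  by_cases ha : a = 0
  · obtain ⟨τ, h0, h1, h2⟩ := exists_hit hy0 hy1 (hab.resolve_left (not_not.mpr ha))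
    exact ⟨τ, h0, by simp [ha, hx0.le, hx1.le], h2 τ h0 le_rfl, Or.inr h1⟩
  by_cases hb : b = 0
  · obtain ⟨τ, h0, h1, h2⟩ := exists_hit hx0 hx1 ha
    exact ⟨τ, h0, h2 τ h0 le_rfl, by simp [hb, hy0.le, hy1.le], Or.inl h1⟩
  obtain ⟨τ, h0, h1, h2⟩ := exists_hit hx0 hx1 ha
  obtain ⟨τ', h0', h1', h2'⟩ := exists_hit hy0 hy1 hb
  rcases le_total τ τ' with h | h
  · exact ⟨τ, h0, h2 τ h0 le_rfl, h2' τ h0 h, Or.inl h1⟩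
  · exact ⟨τ', h0', h2 τ' h0' h, h2' τ' h0' le_rfl, Or.inr h1'⟩

/-- The positions of the entries of `M` outside `{0, 1}`. -/
noncomputable def fracSet {n : ℕ} (M : Matrix (Fin n) (Fin n) ℝ) : Finset (Fin n × Fin n) :=
  Finset.univ.filter fun r => M r.1 r.2 ≠ 0 ∧ M r.1 r.2 ≠ 1

/-- Two fractional entries in one row of a zero-diagonal matrix of `S_n` allow a move that does
not increase `λ_{n-1}` and strictly decreases the number of fractional entries. -/
lemma exists_improve {n : ℕ} (hn : 2 ≤ n) {M : Matrix (Fin n) (Fin n) ℝ} (hM : memS M)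
    (hd : ∀ i, M i i = 0) {i j k : Fin n} (hjk : j ≠ k) (hj : M i j ≠ 0 ∧ M i j ≠ 1)
    (hk : M i k ≠ 0 ∧ M i k ≠ 1) :
    ∃ N : Matrix (Fin n) (Fin n) ℝ, memS N ∧ lambdaK N (n - 1) ≤ lambdaK M (n - 1) ∧
      (∀ i, N i i = 0) ∧ (fracSet N).card < (fracSet M).card := by
  have hji : j ≠ i := fun h => hj.1 (h ▸ hd j)
  have hki : k ≠ i := fun h => hk.1 (h ▸ hd k)
  obtain ⟨p, q, hli, hform⟩ := exists_formLeOn hn M hM.isHermitian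
  obtain ⟨a, b, hab, hdir⟩ := exists_direction (p i) (q i) (p j) (q j) (p k) (q k)
  obtain ⟨τ, hτ, hxj, hxk, hhit⟩ := exists_step
    (lt_of_le_of_ne (hM.2 i j).1 hj.1.symm) (lt_of_le_of_ne (hM.2 i j).2 hj.2)
    (lt_of_le_of_ne (hM.2 i k).1 hk.1.symm) (lt_of_le_of_ne (hM.2 i k).2 hk.2) hab
  let e : Fin n → ℝ := Pi.single i 1
  let f : Fin n → ℝ := a • Pi.single j 1 + b • Pi.single k 1
  let N : Matrix (Fin n) (Fin n) ℝ := M + τ • (vecMulVec e f + vecMulVec f e)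
  have hNap : ∀ r c, N r c = M r c + τ * (e r * f c + f r * e c) := fun r c => by
    simp [N, vecMulVec_apply, mul_add]
  have hei : e i = 1 := by simp [e]
  have hen : ∀ r, r ≠ i → e r = 0 := fun r h => by simp [e, h]
  have hfj : f j = a := by simp [f, hjk]
  have hfk : f k = b := by simp [f, hjk.symm]
  have hfn : ∀ r, r ≠ j → r ≠ k → f r = 0 := fun r h h' => by simp [f, h, h']
  have hfi : f i = 0 := hfn i hji.symm hki.symm
  have hNsymm : ∀ r c, N r c = N c r := fun r c => by
    rw [hNap, hNap, hM.1.apply]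
    ring
  have hNj : N i j = M i j + τ * a := by rw [hNap, hei, hfj, hfi]; ring
  have hNk : N i k = M i k + τ * b := by rw [hNap, hei, hfk, hfi]; ring
  have hNi : ∀ c, c ≠ j → c ≠ k → N i c = M i c := fun c h h' => by
    rw [hNap, hfn c h h', hfi]; ring
  have hNo : ∀ r c, r ≠ i → c ≠ i → N r c = M r c := fun r c h h' => by
    rw [hNap, hen r h, hen c h']; ring
  have hrow : ∀ c, N i c ∈ Set.Icc (0 : ℝ) 1 := by
    intro c
    by_cases h : c = j
    · rw [h, hNj]; exact hxj
    by_cases h' : c = k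
    · rw [h', hNk]; exact hxk
    rw [hNi c h h']; exact hM.2 i c
  have hN : memS N := by
    refine ⟨Matrix.IsSymm.ext fun r c => hNsymm c r, fun r c => ?_⟩
    by_cases hr : r = i
    · rw [hr]; exact hrow c
    by_cases hc : c = i
    · rw [hNsymm, hc]; exact hrow r
    rw [hNo r c hr hc]; exact hM.2 r c
  -- Fractional entries of row `i` of `N` sit at fractional entries of `M`.
  have hrowfrac : ∀ c, N i c ≠ 0 ∧ N i c ≠ 1 → M i c ≠ 0 ∧ M i c ≠ 1 := by
    intro c h0
    by_cases h : c = j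
    · rw [h]; exact hj
    by_cases h' : c = k
    · rw [h']; exact hk
    rwa [hNi c h h'] at h0
  refine ⟨N, hN, ?_, fun r => ?_, ?_⟩
  · refine lambdaK_le_of_formLeOn hn N hN.isHermitian (p := p) (q := q) ⟨hli, fun s t => ?_⟩
    have h1 := hform s t
    have h2 := mul_nonneg_of_nonpos_of_nonpos (neg_nonpos.mpr hτ) (hdir s t)
    have hx : ∀ r, (s • p + t • q) r = s * p r + t * q r := fun r => rfl
    rw [← hx, ← hx, ← hx] at h2
    generalize s • p + t • q = x at *
    have he : e ⬝ᵥ x = x i := by simp [e]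
    have hf : f ⬝ᵥ x = a * x j + b * x k := by simp [f, add_dotProduct]
    have h3 : x ⬝ᵥ N *ᵥ x = x ⬝ᵥ M *ᵥ x + 2 * (τ * (x i * (a * x j + b * x k))) := by
      simp only [N, add_mulVec, smul_mulVec, vecMulVec_mulVec, dotProduct_add, dotProduct_smul,
        he, hf, dotProduct_comm x e, dotProduct_comm x f, smul_eq_mul, op_smul_eq_smul]
      ring
    rw [h3]
    linarith
  · by_cases hr : r = i
    · rw [hr, hNi i hji.symm hki.symm, hd]
    · rw [hNo r r hr hr, hd]
  · apply Finset.card_lt_card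
    rw [Finset.ssubset_iff_of_subset]
    · rcases hhit with h | h
      · refine ⟨(i, j), by simpa [fracSet] using hj, ?_⟩
        rw [← hNj] at h
        simp only [fracSet, Finset.mem_filter]
        tauto
      · refine ⟨(i, k), by simpa [fracSet] using hk, ?_⟩
        rw [← hNk] at h
        simp only [fracSet, Finset.mem_filter]
        tauto
    · rintro ⟨r, c⟩ h
      simp only [fracSet, Finset.mem_filter, Finset.mem_univ, true_and] at h ⊢
      by_cases hr : r = i
      · subst hr
        exact hrowfrac c h
      by_cases hc : c = i
      · subst hc
        rw [← hM.1.apply]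
        rw [hNsymm] at h
        exact hrowfrac r h
      rwa [hNo r c hr hc] at h

theorem stmt_17 (n : ℕ) (hn : 2 ≤ n)
    (hall : ∀ M : Matrix (Fin n) (Fin n) ℝ, memS M →
      (∀ M' : Matrix (Fin n) (Fin n) ℝ, memS M' → lambdaK M (n - 1) ≤ lambdaK M' (n - 1)) →
      lambdaK M n = lambdaK M (n - 1)) :
    ∃ M : Matrix (Fin n) (Fin n) ℝ, memS M ∧
      (∀ M' : Matrix (Fin n) (Fin n) ℝ, memS M' → lambdaK M (n - 1) ≤ lambdaK M' (n - 1)) ∧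
      (∀ i, M i i = 0) ∧
      (∀ i : Fin n, (Finset.univ.filter (fun j => M i j ≠ 0 ∧ M i j ≠ 1)).card ≤ 1) := by
  have main : ∀ m : ℕ, ∀ M : Matrix (Fin n) (Fin n) ℝ, (fracSet M).card = m → memS M →
      (∀ M' : Matrix (Fin n) (Fin n) ℝ, memS M' → lambdaK M (n - 1) ≤ lambdaK M' (n - 1)) →
      (∀ i, M i i = 0) →
      ∃ M : Matrix (Fin n) (Fin n) ℝ, memS M ∧
      (∀ M' : Matrix (Fin n) (Fin n) ℝ, memS M' → lambdaK M (n - 1) ≤ lambdaK M' (n - 1)) ∧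
      (∀ i, M i i = 0) ∧
      (∀ i : Fin n, (Finset.univ.filter (fun j => M i j ≠ 0 ∧ M i j ≠ 1)).card ≤ 1) := by
    intro m
    induction m using Nat.strong_induction_on with
    | _ m ih =>
      intro M hm hM hmin hd
      by_cases hrow : ∀ i : Fin n,
          (Finset.univ.filter (fun j => M i j ≠ 0 ∧ M i j ≠ 1)).card ≤ 1
      · exact ⟨M, hM, hmin, hd, hrow⟩
      · push Not at hrow
        obtain ⟨i, hi⟩ := hrow
        obtain ⟨j, hj, k, hk, hjk⟩ := Finset.one_lt_card.mp hi
        simp only [Finset.mem_filter, Finset.mem_univ, true_and] at hj hk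
        obtain ⟨N, hN, hle, hNd, hlt⟩ := exists_improve hn hM hd hjk hj hk
        exact ih _ (hm ▸ hlt) N rfl hN (fun M' hM' => hle.trans (hmin M' hM')) hNd
  obtain ⟨M, hM, hmin, hd⟩ := exists_minimiser_diag hn
  exact main _ M rfl hM hmin hd
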